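/- Let R be a Cohen–Macaulay Noetherian local ring and M a nonzero finitely generated R-module with qpd_R M < ∞ that is quasi-perfect (grade(M,R) = qpd_R M). Then M is Cohen–Macaulay. -/

import Mathlib

/-!
Write `k` for the residue field and `g` for the common value of `grade M` and `qpd M`. The proof
combines two inequalities valid over any Noetherian local ring:

* `moduleDim_add_le_of_extGrade`: `dim M + grade M ≤ dim R`, from Rees' theorem and the drop of
  dimension along regular sequences;
* `moduleDepth_self_le`: `depth R ≤ depth M + qpd M`, one half of the Auslander–Buchsbaum formula
  for quasi-projective dimension.

As `dim R = depth R`, they give `dim M + g ≤ depth M + g`, hence `dim M ≤ depth M`; the opposite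
inequality always holds.

For the second inequality, depth is measured by the vanishing of `Ext^i(k, -)`, since the modules in
a quasi-projective resolution `P` need not be finitely generated. If `depth M ≥ t`, the sequences
`0 → B_i → Z_i → H_i → 0` and `0 → Z_{i+1} → P_{i+1} → B_i → 0`, used from the bottom of `P`
upwards, show that all cycles have depth at least `t + 1`, provided `t + 1 ≤ depth R`. Used from the
top of `P` downwards to the last nonzero homology `H_h`, they give
`depth B_h ≥ depth R + 1 - (sup P - h)`. As long as `t + 1 + (sup P - h) ≤ depth R`, the sequence
`0 → B_h → Z_h → H_h → 0` then yields `depth M = depth H_h ≥ t + 1`, and one inducts on `t`.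
-/

open CategoryTheory CategoryTheory.Limits Opposite

noncomputable section

variable (R : Type) [CommRing R]

/-- The `i`-th Ext module of two `R`-modules. -/
def extMod (M N : Type) [AddCommGroup M] [Module R M] [AddCommGroup N] [Module R N]
    (i : ℕ) : ModuleCat R :=
  ((Ext R (ModuleCat.{0} R) i).obj (op (ModuleCat.of R M))).obj (ModuleCat.of R N)

/-- The `i`-th Tor module of two `R`-modules. -/
def torMod (M N : Type) [AddCommGroup M] [Module R M] [AddCommGroup N] [Module R N]
    (i : ℕ) : ModuleCat R :=
  ((Tor (ModuleCat.{0} R) i).obj (ModuleCat.of R M)).obj (ModuleCat.of R N)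

/-- `grade(M,N) = inf { i | Ext^i(M,N) ≠ 0 }`, as an extended natural number. -/
def extGrade (M N : Type) [AddCommGroup M] [Module R M] [AddCommGroup N] [Module R N] : ℕ∞ :=
  sInf {c : ℕ∞ | ∃ i : ℕ, c = i ∧ Nontrivial (extMod R M N i)}

/-- `P_R(M,N) = sup { i | Ext^i(M,N) ≠ 0 }`, as an extended natural number. -/
def extSup (M N : Type) [AddCommGroup M] [Module R M] [AddCommGroup N] [Module R N] : ℕ∞ :=
  sSup {c : ℕ∞ | ∃ i : ℕ, c = i ∧ Nontrivial (extMod R M N i)}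

/-- `depth(I, N)`: the supremum of lengths of `N`-regular sequences contained in `I`. -/
def idealDepth (I : Ideal R) (N : Type) [AddCommGroup N] [Module R N] : ℕ∞ :=
  ⨆ rs : {l : List R // (∀ r ∈ l, r ∈ I) ∧ RingTheory.Sequence.IsRegular N l},
    (rs.1.length : ℕ∞)

/-- The depth of a module over a local ring. -/
def moduleDepth [IsLocalRing R] (N : Type) [AddCommGroup N] [Module R N] : ℕ∞ :=
  idealDepth R (IsLocalRing.maximalIdeal R) N

/-- The Krull dimension of a module: the sup of lengths of chains of primes in its support. -/
def moduleDim (M : Type) [AddCommGroup M] [Module R M] : ℕ∞ :=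
  ⨆ c : LTSeries (Module.support R M), (c.length : ℕ∞)

/-- A quasi-projective resolution: a bounded-below complex of projectives whose homologies
are finite direct sums of copies of `M`, not all zero. -/
def IsQuasiProjRes (P : ChainComplex (ModuleCat.{0} R) ℤ)
    (M : Type) [AddCommGroup M] [Module R M] : Prop :=
  (∀ i, Projective (P.X i)) ∧
  (∃ n : ℤ, ∀ i < n, IsZero (P.X i)) ∧
  (∃ a : ℤ → ℕ, (∃ i, 0 < a i) ∧
    ∀ i, Nonempty ((P.homology i) ≅ ModuleCat.of R (Fin (a i) → M)))

/-- Quasi-projective dimension: `inf { sup P - hsup P }` over bounded quasi-projective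
resolutions `P` of `M`.  The condition `sup P - hsup P ≤ n` is encoded as the existence of
a degree `h` with nonzero homology such that `P` vanishes in degrees `> h + n`. -/
def qpd (M : Type) [AddCommGroup M] [Module R M] : ℕ∞ :=
  sInf {c : ℕ∞ | ∃ n : ℕ, c = n ∧ ∃ P : ChainComplex (ModuleCat.{0} R) ℤ,
    IsQuasiProjRes R P M ∧
    ∃ h : ℤ, ¬ IsZero (P.homology h) ∧ ∀ i, h + n < i → IsZero (P.X i)}

/-- A quasi-injective resolution: a bounded-above complex of injectives whose homologies
are finite direct sums of copies of `M`, not all zero. -/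
def IsQuasiInjRes (I : ChainComplex (ModuleCat.{0} R) ℤ)
    (M : Type) [AddCommGroup M] [Module R M] : Prop :=
  (∀ i, Injective (I.X i)) ∧
  (∃ n : ℤ, ∀ i > n, IsZero (I.X i)) ∧
  (∃ b : ℤ → ℕ, (∃ i, 0 < b i) ∧
    ∀ i, Nonempty ((I.homology i) ≅ ModuleCat.of R (Fin (b i) → M)))

/-- Quasi-injective dimension: `inf { hinf I - inf I }` over bounded quasi-injective
resolutions `I` of `M`. -/
def qid (M : Type) [AddCommGroup M] [Module R M] : ℕ∞ :=
  sInf {c : ℕ∞ | ∃ n : ℕ, c = n ∧ ∃ I : ChainComplex (ModuleCat.{0} R) ℤ,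
    IsQuasiInjRes R I M ∧
    ∃ h : ℤ, ¬ IsZero (I.homology h) ∧ ∀ i, i < h - n → IsZero (I.X i)}

/-- Projective dimension, via finite projective resolutions. -/
def projDim (M : Type) [AddCommGroup M] [Module R M] : ℕ∞ :=
  sInf {c : ℕ∞ | ∃ n : ℕ, c = n ∧ ∃ P : ChainComplex (ModuleCat.{0} R) ℤ,
    (∀ i, Projective (P.X i)) ∧ (∀ i : ℤ, (i < 0 ∨ (n : ℤ) < i) → IsZero (P.X i)) ∧
    Nonempty ((P.homology 0) ≅ ModuleCat.of R M) ∧ ∀ i ≠ 0, IsZero (P.homology i)}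

/-- Injective dimension, via finite injective resolutions (in degrees `-n, …, 0`). -/
def injDim (M : Type) [AddCommGroup M] [Module R M] : ℕ∞ :=
  sInf {c : ℕ∞ | ∃ n : ℕ, c = n ∧ ∃ I : ChainComplex (ModuleCat.{0} R) ℤ,
    (∀ i, Injective (I.X i)) ∧ (∀ i : ℤ, (0 < i ∨ i < -(n : ℤ)) → IsZero (I.X i)) ∧
    Nonempty ((I.homology 0) ≅ ModuleCat.of R M) ∧ ∀ i ≠ 0, IsZero (I.homology i)}

/-- The depth of the localization `N_p` over the local ring `R_p`. -/
def localDepth (p : PrimeSpectrum R) (N : Type) [AddCommGroup N] [Module R N] : ℕ∞ :=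
  idealDepth (Localization.AtPrime p.asIdeal)
    (IsLocalRing.maximalIdeal (Localization.AtPrime p.asIdeal))
    (LocalizedModule p.asIdeal.primeCompl N)

end

/-! ### Vanishing of Ext below a given degree -/

/-- `Ext^i(K, N) = 0` for all `i < t`. When `K` is the residue field of a Noetherian local ring and
`N` is finitely generated and nonzero, this says `depth N ≥ t`; unlike the definition through
regular sequences, it makes sense and behaves well for arbitrary `N`. -/
def ExtVanish {R : Type} [CommRing R] (K : ModuleCat.{0} R) (t : ℕ) (N : ModuleCat.{0} R) : Prop :=
  ∀ i < t, ∀ x : Abelian.Ext K N i, x = 0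

section ExtVanish

variable {R : Type} [CommRing R] {K : ModuleCat.{0} R}

lemma ExtVanish.mono {s t : ℕ} {N : ModuleCat.{0} R} (h : ExtVanish K t N) (hst : s ≤ t) :
    ExtVanish K s N :=
  fun i hi => h i (hi.trans_le hst)

lemma ExtVanish.of_retract {t : ℕ} {X Y : ModuleCat.{0} R} (h : ExtVanish K t Y)
    (f : X ⟶ Y) (g : Y ⟶ X) (hfg : f ≫ g = 𝟙 X) : ExtVanish K t X := by
  intro i hi x
  have h1 : x = (x.comp (Abelian.Ext.mk₀ f) (add_zero i)).comp (Abelian.Ext.mk₀ g)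
      (add_zero i) := by
    rw [Abelian.Ext.comp_assoc_of_second_deg_zero, Abelian.Ext.mk₀_comp_mk₀, hfg,
      Abelian.Ext.comp_mk₀_id]
  rw [h1, h i hi (x.comp (Abelian.Ext.mk₀ f) (add_zero i)), Abelian.Ext.zero_comp]

lemma extVanish_of_isZero (t : ℕ) {N : ModuleCat.{0} R} (h : IsZero N) : ExtVanish K t N := by
  intro i _ x
  rw [← x.comp_mk₀_id, h.eq_of_src (𝟙 N) 0, Abelian.Ext.mk₀_zero, Abelian.Ext.comp_zero]

lemma ExtVanish.middle {t : ℕ} {S : ShortComplex (ModuleCat.{0} R)} (hS : S.ShortExact)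
    (h₁ : ExtVanish K t S.X₁) (h₃ : ExtVanish K t S.X₃) : ExtVanish K t S.X₂ := by
  intro i hi x
  obtain ⟨y, rfl⟩ := Abelian.Ext.covariant_sequence_exact₂ K hS x (h₃ i hi _)
  rw [h₁ i hi y, Abelian.Ext.zero_comp]

lemma ExtVanish.right {t : ℕ} {S : ShortComplex (ModuleCat.{0} R)} (hS : S.ShortExact)
    (h₁ : ExtVanish K (t + 1) S.X₁) (h₂ : ExtVanish K t S.X₂) : ExtVanish K t S.X₃ := by
  intro i hi x
  obtain ⟨y, rfl⟩ := Abelian.Ext.covariant_sequence_exact₃ K hS x rfl (h₁ (i + 1) (by lia) _)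
  rw [h₂ i hi y, Abelian.Ext.zero_comp]

lemma ExtVanish.eq_zero_of_comp_eq_zero {t : ℕ} {S : ShortComplex (ModuleCat.{0} R)}
    (hS : S.ShortExact) (h₃ : ExtVanish K t S.X₃) {i : ℕ} (hi : i ≤ t)
    (x : Abelian.Ext K S.X₁ i) (hx : x.comp (Abelian.Ext.mk₀ S.f) (add_zero i) = 0) : x = 0 := by
  cases i with
  | zero =>
    have := hS.mono_f
    exact Abelian.Ext.postcomp_mk₀_injective_of_mono K S.f (by simpa using hx)
  | succ i =>
    obtain ⟨y, rfl⟩ := Abelian.Ext.covariant_sequence_exact₁ K hS x hx rfl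
    rw [h₃ i (by lia) y, Abelian.Ext.zero_comp]

lemma ExtVanish.left {t : ℕ} {S : ShortComplex (ModuleCat.{0} R)} (hS : S.ShortExact)
    (h₂ : ExtVanish K (t + 1) S.X₂) (h₃ : ExtVanish K t S.X₃) : ExtVanish K (t + 1) S.X₁ :=
  fun i hi x => h₃.eq_zero_of_comp_eq_zero hS (by lia) x (h₂ i hi _)

lemma ExtVanish.pi {t : ℕ} {M : Type} [AddCommGroup M] [Module R M]
    (h : ExtVanish K t (ModuleCat.of R M)) (a : ℕ) :
    ExtVanish K t (ModuleCat.of R (Fin a → M)) := by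
  intro i hi x
  have hid : 𝟙 (ModuleCat.of R (Fin a → M)) =
      ∑ j : Fin a, ModuleCat.ofHom (LinearMap.proj (R := R) (φ := fun _ : Fin a => M) j) ≫
        ModuleCat.ofHom (LinearMap.single R (fun _ : Fin a => M) j) := by
    ext v
    simp [ModuleCat.hom_sum, Finset.sum_apply, Pi.single_apply]
  rw [← x.comp_mk₀_id, hid, Abelian.Ext.mk₀_sum, Abelian.Ext.comp_sum]
  refine Finset.sum_eq_zero fun j _ => ?_
  rw [← Abelian.Ext.mk₀_comp_mk₀, ← Abelian.Ext.comp_assoc_of_second_deg_zero,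
    h i hi (x.comp (Abelian.Ext.mk₀ (ModuleCat.ofHom
      (LinearMap.proj (R := R) (φ := fun _ : Fin a => M) j))) (add_zero i)),
    Abelian.Ext.zero_comp]

lemma ExtVanish.of_pi {t : ℕ} {M : Type} [AddCommGroup M] [Module R M] {a : ℕ} (ha : 0 < a)
    (h : ExtVanish K t (ModuleCat.of R (Fin a → M))) : ExtVanish K t (ModuleCat.of R M) := by
  refine h.of_retract (ModuleCat.ofHom (LinearMap.single R (fun _ : Fin a => M) ⟨0, ha⟩))
    (ModuleCat.ofHom (LinearMap.proj (R := R) (φ := fun _ : Fin a => M) ⟨0, ha⟩)) ?_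
  ext v
  simp

/-- The easy half of Rees' theorem, with no finiteness assumption on `N`: multiplication by the
first element `a` of the sequence is injective on `Ext^i(K, N)` by induction, and it is zero because
`a` annihilates `K`. -/
lemma extVanish_of_isWeaklyRegular (rs : List R)
    (hrs : ∀ r ∈ rs, r ∈ Module.annihilator R K) (N : ModuleCat.{0} R)
    (reg : RingTheory.Sequence.IsWeaklyRegular N rs) : ExtVanish K rs.length N := by
  induction rs generalizing N with
  | nil => intro i hi; simp at hi
  | cons a rs ih =>
    rw [RingTheory.Sequence.isWeaklyRegular_cons_iff] at reg
    have ih' := ih (fun r hr => hrs r (List.mem_cons_of_mem _ hr))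
      (ModuleCat.of R (QuotSMulTop a N)) reg.2
    intro i hi x
    refine ih'.eq_zero_of_comp_eq_zero reg.1.smulShortComplex_shortExact (by simpa using hi) x ?_
    have := ConcreteCategory.congr_hom (Abelian.Ext.postcomp_smul_id_eq_zero_of_mem_annihilator
      (M := N) (hrs a List.mem_cons_self) i) x
    exact this

lemma extVanish_of_projective (rs : List R)
    (hrs : ∀ r ∈ rs, r ∈ Module.annihilator R K)
    (reg : RingTheory.Sequence.IsWeaklyRegular R rs) (P : ModuleCat.{0} R) [Projective P] :
    ExtVanish K rs.length P := by
  have : Module.Projective R P := (IsProjective.iff_projective (R := R) P).mpr inferInstance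
  refine extVanish_of_isWeaklyRegular rs hrs P ?_
  exact ((TensorProduct.rid R P).isWeaklyRegular_congr rs).mp (reg.isWeaklyRegular_lTensor (M₂ := P))

end ExtVanish

/-! ### Cycles and boundaries of a complex -/

section Complex

variable {R : Type} [CommRing R] (P : ChainComplex (ModuleCat.{0} R) ℤ)

/-- The boundaries `B_i` of a complex, as the kernel of the projection of cycles onto homology. -/
noncomputable abbrev boundary (i : ℤ) : ModuleCat.{0} R := kernel (P.homologyπ i)

/-- The corestriction `P_{i+1} → B_i` of the differential. -/
noncomputable def toBoundary (i : ℤ) : P.X (i + 1) ⟶ boundary P i :=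
  kernel.lift (P.homologyπ i) (P.toCycles (i + 1) i) (P.toCycles_comp_homologyπ (i + 1) i)

lemma toBoundary_ι (i : ℤ) :
    toBoundary P i ≫ kernel.ι (P.homologyπ i) = P.toCycles (i + 1) i :=
  kernel.lift_ι _ _ _

/-- The short exact sequence `0 → B_i → Z_i → H_i → 0`. -/
lemma boundary_cycles_shortExact (i : ℤ) :
    (ShortComplex.mk (kernel.ι (P.homologyπ i)) (P.homologyπ i)
      (kernel.condition _)).ShortExact where
  exact := ShortComplex.exact_of_f_is_kernel _ (kernelIsKernel _)
  mono_f := by dsimp; infer_instance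
  epi_g := by dsimp; infer_instance

lemma iCycles_toBoundary (i : ℤ) : P.iCycles (i + 1) ≫ toBoundary P i = 0 := by
  rw [← cancel_mono (kernel.ι (P.homologyπ i)), Category.assoc, toBoundary_ι,
    ← cancel_mono (P.iCycles i), Category.assoc, P.toCycles_i]
  simp

/-- The short exact sequence `0 → Z_{i+1} → P_{i+1} → B_i → 0`. -/
lemma cycles_boundary_shortExact (i : ℤ) :
    (ShortComplex.mk (P.iCycles (i + 1)) (toBoundary P i) (iCycles_toBoundary P i)).ShortExact where
  exact := by
    have hk : toBoundary P i ≫ (kernel.ι (P.homologyπ i) ≫ P.iCycles i) = P.d (i + 1) i := by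
      rw [← Category.assoc, toBoundary_ι, P.toCycles_i]
    have hd : (ComplexShape.down ℤ).next (i + 1) = i :=
      (ComplexShape.down ℤ).next_eq' (by simp)
    have hmono : Mono (kernel.ι (P.homologyπ i) ≫ P.iCycles i) := mono_comp _ _
    refine ShortComplex.exact_of_f_is_kernel _ (KernelFork.IsLimit.ofι _ _
      (fun {A} k hk' => P.liftCycles k i hd (by rw [← hk, ← Category.assoc, hk', zero_comp]))
      (fun k hk' => by simp) (fun k hk' m hm => ?_))
    rw [← cancel_mono (P.iCycles (i + 1))]
    simpa using hm
  mono_f := by dsimp; infer_instance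
  epi_g := by
    have hex : (ShortComplex.mk (P.toCycles (i + 1) i) (P.homologyπ i)
        (P.toCycles_comp_homologyπ (i + 1) i)).Exact :=
      ShortComplex.exact_of_g_is_cokernel _
        (P.homologyIsCokernel (i + 1) i ((ComplexShape.down ℤ).prev_eq' (by simp)))
    exact hex.epi_kernelLift

lemma isZero_cycles {i : ℤ} (h : IsZero (P.X i)) : IsZero (P.cycles i) :=
  h.of_mono (P.iCycles i)

lemma isZero_boundary {i : ℤ} (h : IsZero (P.cycles i)) : IsZero (boundary P i) :=
  h.of_mono (kernel.ι (P.homologyπ i))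

end Complex

/-! ### The lower bound `depth R ≤ depth M + qpd M` -/

section LowerBound

variable {R : Type} [CommRing R] {K : ModuleCat.{0} R} {P : ChainComplex (ModuleCat.{0} R) ℤ}

/-- Going up from the bottom of the complex, the cycles are as deep as the homology plus one, as
far as the depth of the terms of the complex allows. -/
lemma extVanish_cycles {t : ℕ} {n₀ : ℤ} (hn₀ : ∀ i < n₀, IsZero (P.X i))
    (hP : ∀ i, ExtVanish K (t + 1) (P.X i)) (hH : ∀ i, ExtVanish K t (P.homology i)) (i : ℤ) :
    ExtVanish K (t + 1) (P.cycles i) := by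
  obtain hi | hi := lt_or_ge i n₀
  · exact extVanish_of_isZero _ (isZero_cycles P (hn₀ i hi))
  · induction i, (show n₀ - 1 ≤ i by lia) using Int.leInduction with
    | base => exact extVanish_of_isZero _ (isZero_cycles P (hn₀ _ (by lia)))
    | succ i hi' ih =>
      have hZ : ExtVanish K (t + 1) (P.cycles i) := by
        obtain h | h := lt_or_ge i n₀
        · exact extVanish_of_isZero _ (isZero_cycles P (hn₀ i h))
        · exact ih h
      have hB : ExtVanish K (t + 1) (boundary P i) :=
        ExtVanish.left (boundary_cycles_shortExact P i) hZ (hH i)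
      exact ExtVanish.left (cycles_boundary_shortExact P i) (hP _) (hB.mono (by lia))

/-- Above the top homology `h`, the boundaries are syzygies in a finite projective resolution, so
each step away from the top `h + n` of the complex costs at most one in depth. -/
lemma extVanish_boundary {D n : ℕ} {h : ℤ} (htop : ∀ i, h + n < i → IsZero (P.X i))
    (hH : ∀ i, h < i → IsZero (P.homology i)) (hP : ∀ i, ExtVanish K D (P.X i))
    (j : ℕ) (hj : j ≤ n) (s : ℕ) (hs : s + j ≤ D + 1) :
    ExtVanish K s (boundary P (h + n - j)) := by
  induction j generalizing s with
  | zero =>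
    -- `P_{h+n+1} = 0` surjects onto `B_{h+n}`.
    refine extVanish_of_isZero _ ?_
    have := (cycles_boundary_shortExact P (h + n - (0 : ℕ))).epi_g
    exact IsZero.of_epi (toBoundary P (h + n - (0 : ℕ))) (htop _ (by simp))
  | succ j ih =>
    have e : h + n - ((j + 1 : ℕ) : ℤ) + 1 = h + n - j := by push_cast; ring
    have hB := ih (by lia) (s + 1) (by lia)
    rw [← e] at hB
    have hZ : ExtVanish K (s + 1) (P.cycles (h + n - ((j + 1 : ℕ) : ℤ) + 1)) :=
      ExtVanish.middle (boundary_cycles_shortExact P _) hB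
        (extVanish_of_isZero _ (hH _ (by lia)))
    exact ExtVanish.right (cycles_boundary_shortExact P _) hZ ((hP _).mono (by lia))

/-- If projectives have depth at least `D` and `M` has a quasi-projective resolution of length at
most `n`, then `M` has depth at least `D - n`. -/
lemma extVanish_of_isQuasiProjRes {M : Type} [AddCommGroup M] [Module R M] [Nontrivial M]
    {D n : ℕ} {h : ℤ} (hP : IsQuasiProjRes R P M) (hD : ∀ i, ExtVanish K D (P.X i))
    (hh : ¬ IsZero (P.homology h)) (htop : ∀ i, h + n < i → IsZero (P.X i))
    (t : ℕ) (ht : t + n ≤ D) : ExtVanish K t (ModuleCat.of R M) := by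
  obtain ⟨-, ⟨n₀, hn₀⟩, a, -, ha⟩ := hP
  -- Replace `h` by the top degree with nonzero homology.
  obtain ⟨h, hh, htop, hH⟩ : ∃ h : ℤ, ¬ IsZero (P.homology h) ∧
      (∀ i, h + n < i → IsZero (P.X i)) ∧ ∀ i, h < i → IsZero (P.homology i) := by
    obtain ⟨h', hh', hmax⟩ := Int.exists_greatest_of_bdd
      (P := fun i => ¬ IsZero (P.homology i))
      ⟨h + n, fun i hi => by
        by_contra hlt
        exact hi ((HomologicalComplex.ExactAt.of_isZero (htop i (by lia))).isZero_homology)⟩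
      ⟨h, hh⟩
    refine ⟨h', hh', fun i hi => htop i ?_, fun i hi => ?_⟩
    · have := hmax h hh
      lia
    · by_contra hne
      have := hmax i hne
      lia
  obtain ⟨e⟩ := ha h
  have hapos : 0 < a h := by
    rw [Nat.pos_iff_ne_zero]
    intro h0
    refine hh (IsZero.of_iso ?_ e)
    rw [h0]
    exact ModuleCat.isZero_of_subsingleton _
  induction t with
  | zero => intro i hi; simp at hi
  | succ t ih =>
    have hHi : ∀ i, ExtVanish K t (P.homology i) := fun i => by
      obtain ⟨ei⟩ := ha i
      exact ((ih (by lia)).pi (a i)).of_retract ei.hom ei.inv ei.hom_inv_id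
    have hZ := extVanish_cycles hn₀ (fun i => (hD i).mono (by lia)) hHi h
    have hB := extVanish_boundary htop hH hD n le_rfl (t + 2) (by lia)
    rw [add_sub_cancel_right] at hB
    have hHh : ExtVanish K (t + 1) (P.homology h) :=
      ExtVanish.right (boundary_cycles_shortExact P h) hB hZ
    exact (hHh.of_retract e.inv e.hom e.inv_hom_id).of_pi hapos

end LowerBound

/-! ### Depth, dimension and grade -/

section Depth

variable {R : Type} [CommRing R]

/-- The Ext modules defined by deriving `Hom` vanish only if the Ext groups defined through the
derived category do; both are computed by a projective resolution. -/
lemma ext_eq_zero_of_subsingleton_extMod {M N : Type} [AddCommGroup M] [Module R M]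
    [AddCommGroup N] [Module R N] {i : ℕ} (h : Subsingleton (extMod R M N i))
    (x : Abelian.Ext (ModuleCat.of R M) (ModuleCat.of R N) i) : x = 0 := by
  let Q := projectiveResolution (ModuleCat.of R M)
  have hz : IsZero ((Q.complex.linearYonedaObj R (ModuleCat.of R N)).homology i) := by
    refine IsZero.of_iso ?_ (Q.isoExt (R := R) i (ModuleCat.of R N)).symm
    exact @ModuleCat.isZero_of_subsingleton _ _ (extMod R M N i) h
  obtain ⟨f, hf, rfl⟩ := Q.extMk_surjective x (i + 1) rfl
  rw [← HomologicalComplex.exactAt_iff_isZero_homology] at hz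
  cases i with
  | zero =>
    rw [HomologicalComplex.exactAt_iff' _ 0 0 1 (by simp) (by simp),
      ShortComplex.moduleCat_exact_iff] at hz
    obtain ⟨g, hg⟩ := hz f hf
    have hg0 : f = 0 := by
      rw [← hg]
      change Q.complex.d 0 0 ≫ (g : Q.complex.X 0 ⟶ ModuleCat.of R N) = 0
      rw [Q.complex.shape 0 0 (by simp)]
      exact zero_comp
    subst hg0
    exact Q.extMk_zero _ _
  | succ i =>
    rw [HomologicalComplex.exactAt_iff' _ i (i + 1) (i + 2) (by simp) (by simp),
      ShortComplex.moduleCat_exact_iff] at hz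
    obtain ⟨g, hg⟩ := hz f hf
    exact (Q.extMk_eq_zero_iff f _ rfl hf i rfl).mpr ⟨g, hg⟩

lemma coe_moduleDim (M : Type) [AddCommGroup M] [Module R M] [Nontrivial M] :
    (moduleDim R M : WithBot ℕ∞) = Module.supportDim R M := by
  have : Nonempty (Module.support R M) := Module.nonempty_support_of_nontrivial.to_subtype
  rw [Module.supportDim, Order.krullDim_eq_iSup_length]
  rfl

variable [IsLocalRing R]

lemma moduleDepth_le_moduleDim [IsNoetherianRing R] (M : Type) [AddCommGroup M] [Module R M]
    [Module.Finite R M] [Nontrivial M] : moduleDepth R M ≤ moduleDim R M := by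
  refine iSup_le fun ⟨rs, _, hreg⟩ => ?_
  rw [← WithBot.coe_le_coe, coe_moduleDim,
    ← Module.supportDim_add_length_eq_supportDim_of_isRegular rs hreg]
  have : Nontrivial (M ⧸ Ideal.ofList rs • (⊤ : Submodule R M)) :=
    Submodule.Quotient.nontrivial_iff.mpr hreg.2.symm
  rw [← coe_moduleDim]
  norm_cast
  exact le_add_self

lemma exists_isRegular_length_eq_moduleDepth (M : Type) [AddCommGroup M] [Module R M]
    [Nontrivial M] (h : moduleDepth R M < ⊤) :
    ∃ rs : List R, (∀ r ∈ rs, r ∈ IsLocalRing.maximalIdeal R) ∧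
      RingTheory.Sequence.IsRegular M rs ∧ (rs.length : ℕ∞) = moduleDepth R M := by
  have : Nonempty {l : List R // (∀ r ∈ l, r ∈ IsLocalRing.maximalIdeal R) ∧
      RingTheory.Sequence.IsRegular M l} :=
    ⟨⟨[], by simp, RingTheory.Sequence.IsRegular.nil R M⟩⟩
  obtain ⟨⟨rs, h1, h2⟩, h3⟩ := ENat.exists_eq_iSup_of_lt_top h
  exact ⟨rs, h1, h2, h3⟩

/-- `grade M + dim M ≤ dim R`: by Rees' theorem the annihilator of `M` contains a regular sequence
of length `grade M`, and `dim M` is at most the dimension of the quotient by that sequence. -/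
lemma moduleDim_add_le_of_extGrade [IsNoetherianRing R] (M : Type) [AddCommGroup M] [Module R M]
    [Module.Finite R M] [Nontrivial M] {g : ℕ} (hg : extGrade R M R = g) :
    moduleDim R M + g ≤ moduleDim R R := by
  have hext : ∀ i < g, Subsingleton
      (Abelian.Ext (ModuleCat.of R M) (ModuleCat.of R R) i) := fun i hi => by
    refine subsingleton_of_forall_eq 0 (ext_eq_zero_of_subsingleton_extMod ?_)
    by_contra hn
    rw [not_subsingleton_iff_nontrivial] at hn
    have : extGrade R M R ≤ i := sInf_le ⟨i, rfl, hn⟩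
    rw [hg, Nat.cast_le] at this
    lia
  have hann : Module.annihilator R M ≠ ⊤ := by
    rw [Ne, Module.annihilator_eq_top_iff]
    exact not_subsingleton M
  have : Module.Finite R (ModuleCat.of R M) := inferInstanceAs (Module.Finite R M)
  have : Module.Finite R (ModuleCat.of R R) := inferInstanceAs (Module.Finite R R)
  obtain ⟨rs, hlen, hmem, hreg⟩ := ModuleCat.exists_isRegular_of_exists_subsingleton_ext
    (Module.annihilator R M) g (ModuleCat.of R R)
    (show Module.annihilator R M • (⊤ : Submodule R R) < ⊤ by
      simpa [lt_top_iff_ne_top] using hann)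
    (ModuleCat.of R M) Module.support_eq_zeroLocus hext
  rw [← WithBot.coe_le_coe, coe_moduleDim, Module.supportDim_self_eq_ringKrullDim,
    ← ringKrullDim_add_length_eq_ringKrullDim_of_isRegular rs hreg, WithBot.coe_add, coe_moduleDim,
    Module.supportDim_eq_ringKrullDim_quotient_annihilator, hlen]
  have hle : Ideal.ofList rs ≤ Module.annihilator R M := Ideal.span_le.mpr hmem
  exact add_le_add (ringKrullDim_le_of_surjective (Ideal.Quotient.factor hle)
    (Ideal.Quotient.factor_surjective hle)) le_rfl

/-- If `Ext^i(k, M)` vanishes for `i < t`, with `k` the residue field, then `depth M ≥ t`. -/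
lemma le_moduleDepth_of_extVanish [IsNoetherianRing R] (M : Type) [AddCommGroup M] [Module R M]
    [Module.Finite R M] [Nontrivial M] {t : ℕ}
    (h : ExtVanish (ModuleCat.of R (R ⧸ IsLocalRing.maximalIdeal R)) t (ModuleCat.of R M)) :
    (t : ℕ∞) ≤ moduleDepth R M := by
  have : Module.Finite R (ModuleCat.of R M) := inferInstanceAs (Module.Finite R M)
  have : Module.Finite R (ModuleCat.of R (R ⧸ IsLocalRing.maximalIdeal R)) :=
    inferInstanceAs (Module.Finite R (R ⧸ IsLocalRing.maximalIdeal R))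
  have hlt : IsLocalRing.maximalIdeal R • (⊤ : Submodule R M) < ⊤ :=
    (Submodule.top_ne_ideal_smul_of_le_jacobson_annihilator
      (IsLocalRing.maximalIdeal_le_jacobson _)).symm.lt_top
  obtain ⟨rs, hlen, hmem, hreg⟩ := ModuleCat.exists_isRegular_of_exists_subsingleton_ext
    (IsLocalRing.maximalIdeal R) t (ModuleCat.of R M) hlt
    (ModuleCat.of R (R ⧸ IsLocalRing.maximalIdeal R))
    (by
      change Module.support R (R ⧸ IsLocalRing.maximalIdeal R) = _
      rw [Module.support_eq_zeroLocus, Ideal.annihilator_quotient])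
    (fun i hi => subsingleton_of_forall_eq 0 (h i hi))
  rw [← hlen]
  exact le_iSup_of_le (⟨rs, hmem, hreg⟩ : {l : List R //
    (∀ r ∈ l, r ∈ IsLocalRing.maximalIdeal R) ∧ RingTheory.Sequence.IsRegular M l}) le_rfl

/-- The inequality `depth R ≤ depth M + qpd M`, for `M` of finite quasi-projective dimension over a
Noetherian local ring. -/
lemma moduleDepth_self_le [IsNoetherianRing R] (M : Type) [AddCommGroup M] [Module R M]
    [Module.Finite R M] [Nontrivial M] (hR : moduleDepth R R < ⊤) {n : ℕ} (hn : qpd R M = n) :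
    moduleDepth R R ≤ moduleDepth R M + n := by
  obtain ⟨rs, hmem, hreg, hlen⟩ := exists_isRegular_length_eq_moduleDepth R hR
  have hne : {c : ℕ∞ | ∃ n : ℕ, c = n ∧ ∃ P : ChainComplex (ModuleCat.{0} R) ℤ,
      IsQuasiProjRes R P M ∧
      ∃ h : ℤ, ¬ IsZero (P.homology h) ∧ ∀ i, h + n < i → IsZero (P.X i)}.Nonempty := by
    rw [Set.nonempty_iff_ne_empty]
    intro he
    rw [qpd, he, sInf_empty] at hn
    exact ENat.top_ne_natCast n hn
  obtain ⟨m, hm, P, hP, h, hh, htop⟩ := csInf_mem hne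
  obtain rfl : n = m := by
    rw [← Nat.cast_inj (R := ℕ∞), ← hn]
    exact hm
  have hPX : ∀ i, ExtVanish (ModuleCat.of R (R ⧸ IsLocalRing.maximalIdeal R)) rs.length (P.X i) :=
    fun i => by
      have := hP.1 i
      refine extVanish_of_projective rs (fun r hr => ?_) hreg.toIsWeaklyRegular (P.X i)
      change r ∈ Module.annihilator R (R ⧸ IsLocalRing.maximalIdeal R)
      rw [Ideal.annihilator_quotient]
      exact hmem r hr
  rw [← hlen]
  obtain hle | hle := le_total rs.length n
  · exact (Nat.cast_le.mpr hle).trans le_add_self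
  · have := le_moduleDepth_of_extVanish M
      (extVanish_of_isQuasiProjRes hP hPX hh htop (rs.length - n) (by lia))
    calc (rs.length : ℕ∞) = ((rs.length - n : ℕ) : ℕ∞) + n := by
          rw [← Nat.cast_add, Nat.sub_add_cancel hle]
      _ ≤ _ := by gcongr

end Depth

/-- Over a Cohen–Macaulay Noetherian local ring, a quasi-perfect module of finite
quasi-projective dimension is Cohen–Macaulay. -/
theorem stmt13 (R : Type) [CommRing R] [IsNoetherianRing R] [IsLocalRing R]
    (hR : moduleDim R R = moduleDepth R R)
    (M : Type) [AddCommGroup M] [Module R M] [Module.Finite R M] (hM : Nontrivial M)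
    (hqpd : qpd R M ≠ ⊤) (hperf : extGrade R M R = qpd R M) :
    moduleDim R M = moduleDepth R M := by
  obtain ⟨n, hn⟩ := ENat.ne_top_iff_exists.mp hqpd
  have hfin : moduleDim R R < ⊤ := by
    rw [← WithBot.coe_lt_coe, coe_moduleDim, Module.supportDim_self_eq_ringKrullDim]
    exact ringKrullDim_lt_top
  have h1 : moduleDim R M + n ≤ moduleDim R R :=
    moduleDim_add_le_of_extGrade M (hperf.trans hn.symm)
  have h2 : moduleDepth R R ≤ moduleDepth R M + n :=
    moduleDepth_self_le M (hR ▸ hfin) hn.symm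
  refine le_antisymm ?_ (moduleDepth_le_moduleDim M)
  exact (ENat.add_le_add_iff_right (ENat.natCast_ne_top n)).mp (h1.trans (hR.le.trans h2))
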